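/- Let H be a complex Hilbert space and u₁, …, u_N unitary operators on H (N ≥ 1). Set T = (2N)⁻¹·Σ_{i=1}^{N}(uᵢ + uᵢ*), a self-adjoint contraction, and let P be the orthogonal projection of H onto the closed subspace ⋂_{i=1}^{N} ker(uᵢ − 1) of common fixed vectors. Then the following are equivalent: (a) there exists κ > 0 such that κ·‖ξ − Pξ‖ ≤ max_{1 ≤ i ≤ N} ‖ξ − uᵢξ‖ for every ξ ∈ H; (b) there exists δ > 0 such that the spectrum of T contains no point of the open interval (1 − δ, 1). -/

import Mathlib

open scoped InnerProductSpace

section GapHelpers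

variable {H : Type*} [NormedAddCommGroup H] [InnerProductSpace ℂ H] [CompleteSpace H]

theorem gap_aux_unitary_norm (v : H →L[ℂ] H) (hv : v ∈ unitary (H →L[ℂ] H)) (ξ : H) :
    2 * ‖ξ‖ ^ 2 - (⟪(v + star v) ξ, ξ⟫_ℂ).re = ‖ξ - v ξ‖ ^ 2 := by
  have h1 : ‖v ξ‖ = ‖ξ‖ := ContinuousLinearMap.norm_map_of_mem_unitary hv ξ
  have h2 : (⟪star v ξ, ξ⟫_ℂ).re = (⟪ξ, v ξ⟫_ℂ).re := by
    rw [ContinuousLinearMap.star_eq_adjoint, ContinuousLinearMap.adjoint_inner_left]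
  have h3 : (⟪v ξ, ξ⟫_ℂ).re = (⟪ξ, v ξ⟫_ℂ).re := by
    rw [← inner_conj_symm, Complex.conj_re]
  have h4 := @norm_sub_sq ℂ H _ _ _ ξ (v ξ)
  rw [h4, h1, ContinuousLinearMap.add_apply, inner_add_left, Complex.add_re, h2, h3]
  simp only [RCLike.re_eq_complex_re]
  ring

theorem gap_aux_quad (N : ℕ) (hN : 1 ≤ N) (u : Fin N → H →L[ℂ] H)
    (hu : ∀ i, u i ∈ unitary (H →L[ℂ] H)) (ξ : H) :
    (⟪(1 - ((2 * N : ℂ))⁻¹ • ∑ i, (u i + star (u i)) : H →L[ℂ] H) ξ, ξ⟫_ℂ).re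
      = (2 * N : ℝ)⁻¹ * ∑ i, ‖ξ - u i ξ‖ ^ 2 := by
  have hN' : (N : ℝ) ≠ 0 := by positivity
  have e : ((2 * N : ℂ))⁻¹ = (((2 * N : ℝ)⁻¹ : ℝ) : ℂ) := by push_cast; rfl
  simp_rw [← fun i => gap_aux_unitary_norm (u i) (hu i) ξ]
  rw [Finset.sum_sub_distrib, e]
  rw [ContinuousLinearMap.sub_apply, ContinuousLinearMap.smul_apply, inner_sub_left,
    inner_smul_left, Complex.sub_re, Complex.conj_ofReal, Complex.re_ofReal_mul,
    ContinuousLinearMap.sum_apply, sum_inner, Complex.re_sum, ContinuousLinearMap.one_apply]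
  have : (⟪ξ, ξ⟫_ℂ).re = ‖ξ‖ ^ 2 := by
    rw [inner_self_eq_norm_sq_to_K]; norm_cast
  rw [this]
  simp only [Finset.sum_const, Finset.card_univ, Fintype.card_fin, nsmul_eq_mul]
  field_simp

/-- Lower bound implies invertibility below the gap. -/
theorem gap_aux_unit (A P : H →L[ℂ] H) (hA : IsSelfAdjoint A) (hP : IsSelfAdjoint P)
    (hPP : P * P = P) (hAP : A * P = 0) (c e : ℝ) (he : 0 < e) (hec : e < c)
    (h : ∀ ξ, c * ‖ξ - P ξ‖ ^ 2 ≤ (⟪A ξ, ξ⟫_ℂ).re) :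
    IsUnit (A - algebraMap ℂ (H →L[ℂ] H) (e : ℂ)) := by
  have hPA : P * A = 0 := by
    have := congrArg star hAP
    rwa [star_mul, hA.star_eq, hP.star_eq, star_zero] at this
  set S : H →L[ℂ] H := 1 - P - P with hS
  have hSS : S * S = 1 := by
    rw [hS]; simp only [mul_sub, sub_mul, hPP, one_mul, mul_one]; abel
  have hSu : IsUnit S := ⟨⟨S, S, hSS, hSS⟩, rfl⟩
  have hB : IsUnit (S * (A - algebraMap ℂ (H →L[ℂ] H) (e : ℂ))) := by
    have hm : 0 < min (c - e) e := lt_min (by linarith) he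
    refine ContinuousLinearMap.isUnit_of_forall_le_norm_inner_map _
      (c := ⟨min (c - e) e, hm.le⟩) hm ?_
    intro ξ
    refine le_trans ?_ (Complex.re_le_norm _)
    have hSA : S * (A - algebraMap ℂ (H →L[ℂ] H) (e : ℂ)) = A - (e : ℂ) • (1 - P - P) := by
      rw [hS, Algebra.algebraMap_eq_smul_one, sub_mul, sub_mul, mul_sub P, hPA]
      simp only [one_mul, mul_smul_comm, mul_one, smul_sub]
      abel
    have hPx : (⟪P ξ, ξ⟫_ℂ).re = ‖P ξ‖ ^ 2 := by
      have : ⟪P ξ, P ξ⟫_ℂ = ⟪P ξ, ξ⟫_ℂ := by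
        conv_lhs => rw [← hP.star_eq]
        rw [ContinuousLinearMap.star_eq_adjoint, ContinuousLinearMap.adjoint_inner_right,
          ← ContinuousLinearMap.star_eq_adjoint, hP.star_eq,
          ← ContinuousLinearMap.mul_apply, hPP]
      rw [← this, inner_self_eq_norm_sq_to_K]; norm_cast
    have hxx : (⟪ξ, ξ⟫_ℂ).re = ‖ξ‖ ^ 2 := by
      rw [inner_self_eq_norm_sq_to_K]; norm_cast
    have hd : ‖ξ - P ξ‖ ^ 2 = ‖ξ‖ ^ 2 - ‖P ξ‖ ^ 2 := by
      have h4 := @norm_sub_sq ℂ H _ _ _ ξ (P ξ)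
      have h3 : (⟪P ξ, ξ⟫_ℂ).re = (⟪ξ, P ξ⟫_ℂ).re := by
        rw [← inner_conj_symm, Complex.conj_re]
      simp only [RCLike.re_eq_complex_re] at h4
      rw [h4, ← h3, hPx]; ring
    have hx := h ξ
    rw [hSA]
    simp only [ContinuousLinearMap.sub_apply, ContinuousLinearMap.smul_apply,
      ContinuousLinearMap.one_apply, inner_sub_left, inner_smul_left, Complex.sub_re,
      Complex.conj_ofReal, Complex.re_ofReal_mul, hPx, hxx]
    change ‖ξ‖ ^ 2 * min (c - e) e ≤ _
    have h1 : min (c - e) e * ‖ξ - P ξ‖ ^ 2 ≤ (c - e) * ‖ξ - P ξ‖ ^ 2 :=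
      mul_le_mul_of_nonneg_right (min_le_left _ _) (by positivity)
    have h2 : min (c - e) e * ‖P ξ‖ ^ 2 ≤ e * ‖P ξ‖ ^ 2 :=
      mul_le_mul_of_nonneg_right (min_le_right _ _) (by positivity)
    rw [hd] at h1 hx
    linarith
  have := hSu.mul hB
  rwa [← mul_assoc, hSS, one_mul] at this

/-- A spectral gap of a positive operator gives a lower bound off the kernel. -/
theorem gap_aux_lower (A P : H →L[ℂ] H) (hA : 0 ≤ A) (hP : IsSelfAdjoint P)
    (hAP : A * P = 0) (hker : ∀ ξ, A ξ = 0 → P ξ = ξ) (d : ℝ) (hd : 0 < d)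
    (hs : ∀ x ∈ spectrum ℝ A, x = 0 ∨ d ≤ x) (ξ : H) :
    d * ‖ξ - P ξ‖ ^ 2 ≤ (⟪A ξ, ξ⟫_ℂ).re := by
  have hAs : IsSelfAdjoint A := IsSelfAdjoint.of_nonneg hA
  have hPA : P * A = 0 := by
    have := congrArg star hAP
    rwa [star_mul, hAs.star_eq, hP.star_eq, star_zero] at this
  let h : ℝ → ℝ := fun x => (max x d)⁻¹
  have hpos : ∀ x : ℝ, max x d ≠ 0 := fun x => (lt_of_lt_of_le hd (le_max_right _ _)).ne'
  have hc : Continuous h := (continuous_id.max continuous_const).inv₀ hpos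
  have hcid : ContinuousOn (fun x : ℝ => x) (spectrum ℝ A) := continuousOn_id
  have hch : ContinuousOn h (spectrum ℝ A) := hc.continuousOn
  have hcQ : ContinuousOn (fun x => x * h x) (spectrum ℝ A) := hcid.mul hch
  have hid : cfc (fun x : ℝ => x) A = A := cfc_id' ℝ A
  obtain ⟨R, hR⟩ : ∃ R, R = cfc h A := ⟨_, rfl⟩
  have hQ : cfc (fun x => x * h x) A = A * R := by
    rw [cfc_mul (fun x : ℝ => x) h A hcid hch, hid, hR]
  have hAQ : A * (A * R) = A := by
    rw [← hQ]
    nth_rewrite 1 [← hid]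
    rw [← cfc_mul (fun x : ℝ => x) _ A hcid hcQ]
    nth_rewrite 2 [← hid]
    refine cfc_congr ?_
    intro x hx
    rcases hs x hx with rfl | hx
    · simp
    · have : x ≠ 0 := by linarith
      simp [h, max_eq_left hx, this]
  have hle : d • (A * R) ≤ A := by
    rw [← hQ, ← cfc_smul d _ A hcQ]
    nth_rewrite 2 [← hid]
    refine cfc_mono ?_ (hcQ.const_smul d) hcid
    intro x hx
    rcases hs x hx with rfl | hx
    · simp
    · have : x ≠ 0 := by linarith
      simp [h, max_eq_left hx, this, hx]
  have hPQ : P * (A * R) = 0 := by rw [← mul_assoc, hPA, zero_mul]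
  have hQP : ∀ η, (A * R) η = η - P η := by
    intro η
    have h1 : A (η - (A * R) η) = 0 := by
      have := congrArg (fun B : H →L[ℂ] H => B η) hAQ
      simp only [ContinuousLinearMap.mul_apply] at this
      rw [map_sub, ContinuousLinearMap.mul_apply, this, sub_self]
    have h2 := hker _ h1
    have h3 : P ((A * R) η) = 0 := by
      have := congrArg (fun B : H →L[ℂ] H => B η) hPQ
      simpa using this
    rw [map_sub, h3, sub_zero] at h2
    rw [h2]; abel
  have h1 := ((ContinuousLinearMap.le_def _ _).1 hle).re_inner_nonneg_left ξ
  have hPP : P (P ξ) = P ξ := hker _ (by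
    have := congrArg (fun B : H →L[ℂ] H => B ξ) hAP
    simpa using this)
  have h0 : ⟪ξ - P ξ, P ξ⟫_ℂ = 0 := by
    conv_lhs => rw [← hP.star_eq]
    rw [ContinuousLinearMap.star_eq_adjoint, ContinuousLinearMap.adjoint_inner_right,
      ← ContinuousLinearMap.star_eq_adjoint, hP.star_eq, map_sub, hPP, sub_self, inner_zero_left]
  have h2 : (⟪ξ - P ξ, ξ⟫_ℂ).re = ‖ξ - P ξ‖ ^ 2 := by
    have : ⟪ξ - P ξ, ξ⟫_ℂ = ⟪ξ - P ξ, ξ - P ξ⟫_ℂ := by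
      rw [inner_sub_right _ ξ, h0, sub_zero]
    rw [this, inner_self_eq_norm_sq_to_K]; norm_cast
  have h3 : (d • (A * R)) ξ = (d : ℂ) • (ξ - P ξ) := by
    rw [ContinuousLinearMap.smul_apply, hQP]; simp
  rw [ContinuousLinearMap.sub_apply, h3, inner_sub_left, inner_smul_left, Complex.conj_ofReal]
    at h1
  simp only [RCLike.re_eq_complex_re, Complex.sub_re, Complex.re_ofReal_mul, h2] at h1
  linarith

end GapHelpers

/-- For unitaries `u₁, …, u_N` on a complex Hilbert space `H`, with
`T = (2N)⁻¹ Σᵢ (uᵢ + uᵢ*)` and `P` the orthogonal projection onto the common fixed vectors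
`⋂ᵢ ker(uᵢ − 1)`, the spectral-gap inequality
`∃ κ > 0, κ‖ξ − Pξ‖ ≤ maxᵢ ‖ξ − uᵢξ‖` holds iff the spectrum of `T` misses an interval
`(1 − δ, 1)` for some `δ > 0`. -/
theorem spectral_gap_iff_spectrum_gap {H : Type*} [NormedAddCommGroup H]
    [InnerProductSpace ℂ H] [CompleteSpace H]
    (N : ℕ) (hN : 1 ≤ N) (u : Fin N → H →L[ℂ] H)
    (hu : ∀ i, u i ∈ unitary (H →L[ℂ] H))
    (T : H →L[ℂ] H)
    (hT : T = ((2 * N : ℂ))⁻¹ • ∑ i, (u i + star (u i)))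
    (P : H →L[ℂ] H)
    (hPrange : ∀ (ξ : H) (i : Fin N), u i (P ξ) = P ξ)
    (hPfix : ∀ ξ : H, (∀ i : Fin N, u i ξ = ξ) → P ξ = ξ)
    (hPsa : IsSelfAdjoint P) :
    (∃ κ > (0 : ℝ), ∀ ξ : H, κ * ‖ξ - P ξ‖ ≤ ⨆ i : Fin N, ‖ξ - u i ξ‖) ↔
      ∃ δ > (0 : ℝ), ∀ x : ℝ, 1 - δ < x → x < 1 → (x : ℂ) ∉ spectrum ℂ T := by
  have hN0 : (0 : ℝ) < N := by exact_mod_cast hN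
  haveI : Nonempty (Fin N) := ⟨⟨0, hN⟩⟩
  have hstar : ∀ (i : Fin N) (ξ : H), u i ξ = ξ → star (u i) ξ = ξ := by
    intro i ξ h
    have := congrArg (fun B : H →L[ℂ] H => B ξ) (Unitary.star_mul_self_of_mem (hu i))
    simp only [ContinuousLinearMap.mul_apply, ContinuousLinearMap.one_apply, h] at this
    exact this
  obtain ⟨A, hA⟩ : ∃ A : H →L[ℂ] H, A = 1 - T := ⟨_, rfl⟩
  have hquad : ∀ ξ, (⟪A ξ, ξ⟫_ℂ).re = (2 * N : ℝ)⁻¹ * ∑ i, ‖ξ - u i ξ‖ ^ 2 := by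
    intro ξ
    rw [hA, hT]
    exact gap_aux_quad N hN u hu ξ
  have hAsa : IsSelfAdjoint A := by
    rw [hA, hT, IsSelfAdjoint]
    simp only [star_sub, star_one, star_smul, star_sum, star_add, star_star]
    congr 2
    · simp
    · exact Finset.sum_congr rfl fun i _ => add_comm _ _
  have hApos : 0 ≤ A := by
    rw [ContinuousLinearMap.nonneg_iff_isPositive, ContinuousLinearMap.isPositive_def']
    refine ⟨hAsa, fun ξ => ?_⟩
    rw [ContinuousLinearMap.reApplyInnerSelf_apply]
    simp only [RCLike.re_eq_complex_re]
    rw [hquad]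
    positivity
  have hPP : P * P = P := by
    ext ξ
    exact hPfix _ (hPrange ξ)
  have hAP : A * P = 0 := by
    ext ξ
    have h2N : (2 * N : ℂ) ≠ 0 := by
      have : (N : ℂ) ≠ 0 := by exact_mod_cast hN0.ne'
      simpa using this
    have : ∑ i, (u i + star (u i)) (P ξ) = (2 * N : ℂ) • P ξ := by
      simp only [ContinuousLinearMap.add_apply, hPrange ξ, hstar _ _ (hPrange ξ _)]
      rw [Finset.sum_const, Finset.card_univ, Fintype.card_fin, ← two_smul ℂ (P ξ),
        ← Nat.cast_smul_eq_nsmul ℂ, smul_smul, mul_comm]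
    rw [hA, hT, ContinuousLinearMap.mul_apply, ContinuousLinearMap.sub_apply,
      ContinuousLinearMap.smul_apply, ContinuousLinearMap.sum_apply, this, smul_smul,
      inv_mul_cancel₀ h2N]
    simp
  have hker : ∀ ξ, A ξ = 0 → P ξ = ξ := by
    intro ξ h
    refine hPfix ξ fun i => ?_
    have hq := hquad ξ
    rw [h, inner_zero_left, Complex.zero_re, eq_comm, mul_eq_zero] at hq
    have hq' := hq.resolve_left (by positivity)
    rw [Finset.sum_eq_zero_iff_of_nonneg (fun i _ => by positivity)] at hq'
    have := hq' i (Finset.mem_univ i)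
    rw [sq_eq_zero_iff, norm_eq_zero, sub_eq_zero] at this
    exact this.symm
  have hbdd : ∀ ξ : H, BddAbove (Set.range fun i : Fin N => ‖ξ - u i ξ‖) := fun ξ =>
    (Set.finite_range _).bddAbove
  constructor
  · rintro ⟨κ, hκ, h⟩
    refine ⟨(2 * N : ℝ)⁻¹ * κ ^ 2, by positivity, fun x hx1 hx2 => ?_⟩
    have hU := gap_aux_unit A P hAsa hPsa hPP hAP ((2 * N : ℝ)⁻¹ * κ ^ 2) (1 - x)
      (by linarith) (by linarith) (fun ξ => by
        rw [hquad, mul_assoc, ← mul_pow]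
        refine mul_le_mul_of_nonneg_left ?_ (by positivity)
        obtain ⟨i, hi⟩ := exists_eq_ciSup_of_finite (f := fun i : Fin N => ‖ξ - u i ξ‖)
        have h1 := h ξ
        rw [← hi] at h1
        calc (κ * ‖ξ - P ξ‖) ^ 2 ≤ ‖ξ - u i ξ‖ ^ 2 := pow_le_pow_left₀ (by positivity) h1 2
          _ ≤ ∑ i, ‖ξ - u i ξ‖ ^ 2 :=
            Finset.single_le_sum (f := fun i => ‖ξ - u i ξ‖ ^ 2)
              (fun i _ => by positivity) (Finset.mem_univ i))
    rw [spectrum.notMem_iff]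
    convert hU using 1
    rw [hA]
    simp only [Complex.ofReal_sub, Complex.ofReal_one, map_sub, map_one]
    abel
  · rintro ⟨δ, hδ, h⟩
    refine ⟨Real.sqrt δ, Real.sqrt_pos.2 hδ, fun ξ => ?_⟩
    have hlow := gap_aux_lower A P hApos hPsa hAP hker δ hδ (by
      intro x hx
      by_contra! hcon
      have hx0 : 0 ≤ x := spectrum_nonneg_of_nonneg hApos hx
      have hx0' : 0 < x := lt_of_le_of_ne hx0 (Ne.symm hcon.1)
      have h1 := h (1 - x) (by linarith [hcon.2]) (by linarith)
      rw [spectrum.notMem_iff] at h1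
      rw [spectrum.mem_iff] at hx
      apply hx
      rw [← IsUnit.neg_iff]
      convert h1 using 1
      rw [hA, IsScalarTower.algebraMap_apply ℝ ℂ (H →L[ℂ] H)]
      simp only [Complex.ofReal_sub, Complex.ofReal_one, map_sub, map_one,
        Complex.coe_algebraMap]
      abel) ξ
    rw [hquad] at hlow
    set M := ⨆ i : Fin N, ‖ξ - u i ξ‖ with hM
    have hle : ∀ i, ‖ξ - u i ξ‖ ≤ M := fun i => le_ciSup (hbdd ξ) i
    have hM0 : 0 ≤ M := le_trans (norm_nonneg _) (hle ⟨0, hN⟩)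
    have hsum : ∑ i, ‖ξ - u i ξ‖ ^ 2 ≤ N * M ^ 2 := by
      calc ∑ i, ‖ξ - u i ξ‖ ^ 2 ≤ ∑ _i : Fin N, M ^ 2 :=
            Finset.sum_le_sum fun i _ => pow_le_pow_left₀ (norm_nonneg _) (hle i) 2
        _ = N * M ^ 2 := by simp
    have h2 : (2 * N : ℝ)⁻¹ * ∑ i, ‖ξ - u i ξ‖ ^ 2 ≤ M ^ 2 := by
      rw [inv_mul_le_iff₀ (by positivity)]
      nlinarith [sq_nonneg M]
    refine (pow_le_pow_iff_left₀ (by positivity) hM0 two_ne_zero).1 ?_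
    rw [mul_pow, Real.sq_sqrt hδ.le]
    linarith
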